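/- Let c and d be natural numbers and let X be the 2×2 integer matrix with rows (−1, −c) and (d, c·d − 1). If X³ is the identity matrix, then c = 1 and d = 1. -/

import Mathlib

/-- If the 2×2 integer matrix `X = !![-1, -c; d, c*d - 1]` (with `c d : ℕ`) satisfies
`X ^ 3 = 1`, then `c = 1` and `d = 1`. -/
theorem stmt_5 (c d : ℕ)
    (h : (!![(-1 : ℤ), -(c : ℤ); (d : ℤ), (c : ℤ) * (d : ℤ) - 1]) ^ 3 = 1) :
    c = 1 ∧ d = 1 := by
  have h00 := congrFun (congrFun h 0) 0
  have h01 := congrFun (congrFun h 0) 1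
  simp [pow_succ, Matrix.mul_apply, Fin.sum_univ_two] at h00 h01
  have e : ((c : ℤ) * d - 1) * ((c : ℤ) * d - 2) = 0 := by linear_combination -h00
  rcases mul_eq_zero.mp e with e | e
  · have e1 : c * d = 1 := by
      have : (c : ℤ) * d = 1 := by linarith
      exact_mod_cast this
    exact mul_eq_one.mp e1
  · exfalso
    have hc : (c : ℤ) = 0 := by
      linear_combination h01 + (c : ℤ) * ((c : ℤ) * d - 2) * e
    rw [hc] at e
    norm_num at e
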